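/- Let F, G : ℕ → ℂ be finitely supported and define, for v ∈ V_+, (F★G)(v) = Σ_{w ∈ V_+} F(dist(v,w))·G(|w|). Then (a) F★G is radial around v_0: there is H : ℕ → ℂ with (F★G)(v) = H(|v|) for all v ∈ V_+; and (b) the product is commutative: Σ_{w ∈ V_+} F(dist(v,w))·G(|w|) = Σ_{w ∈ V_+} G(dist(v,w))·F(|w|) for every v ∈ V_+. -/

import Mathlib

open scoped BigOperators ComplexOrder

/-- A semi-homogeneous tree `T_{q_+,q_-}`: a connected acyclic simple graph with a
parity function `eps` (true = `+`, false = `−`) that flips across edges, in which every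
vertex of parity `+` has exactly `qp + 1` neighbors and every vertex of parity `−` has
exactly `qm + 1` neighbors.  Spheres are finite (this follows from local finiteness
and connectedness, and is recorded as a field for convenience). -/
structure SemiHomTree (qp qm : ℕ) (V : Type) where
  G : SimpleGraph V
  connected : G.Connected
  acyclic : G.IsAcyclic
  eps : V → Bool
  adj_parity : ∀ ⦃v w : V⦄, G.Adj v w → eps w = !eps v
  nbr_finite : ∀ v : V, {w : V | G.Adj v w}.Finite
  degree_plus : ∀ v : V, eps v = true → {w : V | G.Adj v w}.ncard = qp + 1
  degree_minus : ∀ v : V, eps v = false → {w : V | G.Adj v w}.ncard = qm + 1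
  sphere_finite : ∀ (v : V) (n : ℕ), {w : V | G.dist v w = n}.Finite

/-- The averaging operator `M_n`: average of `f` over the sphere of radius `n` around `v`. -/
noncomputable def Mop {qp qm : ℕ} {V : Type} (T : SemiHomTree qp qm V)
    (n : ℕ) (f : V → ℂ) (v : V) : ℂ :=
  (({w : V | T.G.dist v w = n}.ncard : ℂ))⁻¹ * ∑ᶠ w ∈ {w : V | T.G.dist v w = n}, f w

/-- The Laplace operator `μ₁`: the average of `f` over the neighbors of `v`. -/
noncomputable def lap {qp qm : ℕ} {V : Type} (T : SemiHomTree qp qm V)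
    (f : V → ℂ) (v : V) : ℂ :=
  (((if T.eps v then qp else qm : ℕ) : ℂ) + 1)⁻¹ * ∑ᶠ w ∈ {w : V | T.G.Adj v w}, f w

/-!
The commutativity is that of a Gelfand pair. Summing a function over the spheres of radius `a + 1`
around the neighbors of `v` counts the sphere of radius `a + 2` once and the sphere of radius `a`
a number of times depending only on the parity of `v` and on `a`. Solving this recursion for the
sphere of radius `a + 2` shows that kernels depending only on the distance and the parity stay so
under summation over spheres. In particular the number of `w` of a given parity at distance `a`
from `u` and `b` from `v` depends only on the distance and the parity, so any two pairs
`(u, v)`, `(u', v')` agreeing in these are matched by a bijection of the vertices that transports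
both distances. Radiality is the invariance of the convolution under such bijections, and
commutativity is the case `(u', v') = (v, u)`.
-/

section LocallyFiniteTree

variable {V M : Type*} {G : SimpleGraph V}

lemma dist_left_eq_dist_add_one_of_adj (hG : G.IsTree) {v x : V} (hvx : G.Adj v x) (u : V) :
    G.dist v u = G.dist x u + 1 ∨ G.dist x u = G.dist v u + 1 := by
  simpa only [G.dist_comm (u := u)] using hG.dist_eq_dist_add_one_of_adj u hvx

lemma existsUnique_adj_dist_add_one_eq (hG : G.IsTree) {u v : V} (huv : u ≠ v) :
    ∃! x, G.Adj v x ∧ G.dist x u + 1 = G.dist v u := by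
  obtain ⟨p, hp⟩ := hG.connected.exists_walk_length_eq_dist v u
  cases p with
  | nil => exact absurd rfl huv
  | @cons _ x _ hvx p =>
    have hx : G.dist x u + 1 = G.dist v u := by
      have hle := SimpleGraph.dist_le p
      have hstep := dist_left_eq_dist_add_one_of_adj hG hvx u
      rw [SimpleGraph.Walk.length_cons] at hp
      omega
    refine ⟨x, ⟨hvx, hx⟩, fun y ⟨hvy, hy⟩ => ?_⟩
    obtain ⟨q, hq⟩ := hG.connected.exists_walk_length_eq_dist y u
    have hp_path := (SimpleGraph.Walk.cons hvx p).isPath_of_length_eq_dist hp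
    have hq_path := (SimpleGraph.Walk.cons hvy q).isPath_of_length_eq_dist
      (by rw [SimpleGraph.Walk.length_cons, hq, hy])
    have hpq := congrArg Subtype.val
      ((hG.isAcyclic.subsingleton_path v u).elim ⟨_, hq_path⟩ ⟨_, hp_path⟩)
    simpa only [SimpleGraph.Walk.snd_cons] using congrArg SimpleGraph.Walk.snd hpq

lemma finite_setOf_dist_eq [G.LocallyFinite] (hG : G.Connected) (v : V) (n : ℕ) :
    {w | G.dist v w = n}.Finite := by
  induction n generalizing v with
  | zero => simp only [hG.dist_eq_zero_iff, Set.ofPred_eq_eq_singleton', Set.finite_singleton]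
  | succ n ih =>
    refine ((G.neighborSet v).toFinite.biUnion fun x _ => ih x).subset fun w hw => ?_
    obtain ⟨p, hp⟩ := hG.exists_walk_length_eq_dist v w
    rw [Set.mem_ofPred_eq] at hw
    cases p with
    | nil => simp only [SimpleGraph.Walk.length_nil] at hp; omega
    | @cons _ x _ hvx p =>
      refine Set.mem_biUnion hvx (?_ : G.dist x w = n)
      have hle := SimpleGraph.dist_le p
      have htri := hG.dist_triangle (u := v) (v := x) (w := w)
      rw [SimpleGraph.dist_eq_one_iff_adj.2 hvx] at htri
      rw [SimpleGraph.Walk.length_cons] at hp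
      omega

variable [G.LocallyFinite]

/-- The sphere of radius `n` around `v` in a locally finite connected graph. Connectedness is
required because `G.dist` is `0` between different components. -/
noncomputable def distSphere (hG : G.Connected) (v : V) (n : ℕ) : Finset V :=
  (finite_setOf_dist_eq hG v n).toFinset

@[simp]
lemma mem_distSphere {hG : G.Connected} {v w : V} {n : ℕ} :
    w ∈ distSphere hG v n ↔ G.dist v w = n := by
  simp [distSphere]

lemma distSphere_zero (hG : G.Connected) (v : V) : distSphere hG v 0 = {v} := by
  ext w
  rw [mem_distSphere, hG.dist_eq_zero_iff, Finset.mem_singleton, eq_comm]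

lemma distSphere_one (hG : G.Connected) (v : V) : distSphere hG v 1 = G.neighborFinset v := by
  ext w
  rw [mem_distSphere, SimpleGraph.dist_eq_one_iff_adj, SimpleGraph.mem_neighborFinset]

variable (G) in
/-- In a tree, the number of neighbors of `v` that are further than `v` from a given vertex at
distance `n` from `v`: all of them if `n = 0`, and all but one otherwise. -/
def outDegree (v : V) (n : ℕ) : ℕ :=
  if n = 0 then G.degree v else G.degree v - 1

lemma card_neighborFinset_filter_dist_add_one_eq (hG : G.IsTree) {u v : V} (huv : u ≠ v) :
    {x ∈ G.neighborFinset v | G.dist x u + 1 = G.dist v u}.card = 1 := by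
  obtain ⟨y, hy, hy_unique⟩ := existsUnique_adj_dist_add_one_eq hG huv
  refine Finset.card_eq_one.2 ⟨y, Finset.eq_singleton_iff_unique_mem.2 ⟨?_, fun x hx => ?_⟩⟩
  · simpa only [Finset.mem_filter, SimpleGraph.mem_neighborFinset] using hy
  · exact hy_unique x (by simpa only [Finset.mem_filter, SimpleGraph.mem_neighborFinset] using hx)

lemma neighborFinset_filter_not_dist_add_one_eq (hG : G.IsTree) (u v : V) :
    {x ∈ G.neighborFinset v | ¬G.dist x u + 1 = G.dist v u} =
      {x ∈ G.neighborFinset v | G.dist x u = G.dist v u + 1} := by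
  refine Finset.filter_congr fun x hx => ?_
  have hstep := dist_left_eq_dist_add_one_of_adj hG ((G.mem_neighborFinset v x).1 hx) u
  omega

lemma card_neighborFinset_filter_dist_eq_add_one (hG : G.IsTree) (u v : V) :
    {x ∈ G.neighborFinset v | G.dist x u = G.dist v u + 1}.card = outDegree G v (G.dist v u) := by
  have hsplit := Finset.card_filter_add_card_filter_not (s := G.neighborFinset v)
    (fun x => G.dist x u + 1 = G.dist v u)
  rw [neighborFinset_filter_not_dist_add_one_eq hG, SimpleGraph.card_neighborFinset_eq_degree]
    at hsplit
  rcases eq_or_ne u v with rfl | huv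
  · simpa [outDegree] using hsplit
  · rw [card_neighborFinset_filter_dist_add_one_eq hG huv] at hsplit
    rw [outDegree, if_neg (hG.connected.pos_dist_of_ne huv.symm).ne']
    omega

variable [AddCommMonoid M]

lemma sum_neighborFinset_comp_dist (hG : G.IsTree) (f : ℕ → M) (u v : V) :
    ∑ x ∈ G.neighborFinset v, f (G.dist x u) =
      (if G.dist v u = 0 then 0 else f (G.dist v u - 1)) +
        outDegree G v (G.dist v u) • f (G.dist v u + 1) := by
  rw [← Finset.sum_filter_add_sum_filter_not _ (fun x => G.dist x u + 1 = G.dist v u),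
    neighborFinset_filter_not_dist_add_one_eq hG]
  congr 1
  · split_ifs with h
    · simp [h]
    · have huv : u ≠ v := by rintro rfl; exact h SimpleGraph.dist_self
      have hconst : ∀ x ∈ ({x ∈ G.neighborFinset v | G.dist x u + 1 = G.dist v u} : Finset V),
          f (G.dist x u) = f (G.dist v u - 1) := fun x hx => by
        rw [← (Finset.mem_filter.1 hx).2, Nat.add_sub_cancel]
      rw [Finset.sum_eq_card_nsmul hconst, card_neighborFinset_filter_dist_add_one_eq hG huv,
        one_nsmul]
  · rw [← card_neighborFinset_filter_dist_eq_add_one hG]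
    exact Finset.sum_eq_card_nsmul fun x hx => by rw [(Finset.mem_filter.1 hx).2]

lemma sum_neighborFinset_sum_distSphere (hG : G.IsTree) (h : V → M) (v : V) (a : ℕ) :
    ∑ x ∈ G.neighborFinset v, ∑ w ∈ distSphere hG.connected x (a + 1), h w =
      ∑ w ∈ distSphere hG.connected v (a + 2), h w +
        outDegree G v a • ∑ w ∈ distSphere hG.connected v a, h w := by
  classical
  have hdisj : Disjoint (distSphere hG.connected v (a + 2)) (distSphere hG.connected v a) :=
    Finset.disjoint_left.2 fun w hw hw' => by rw [mem_distSphere] at hw hw'; omega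
  rw [Finset.sum_comm' (s' := fun w => {x ∈ G.neighborFinset v | G.dist x w = a + 1})
    (t' := distSphere hG.connected v (a + 2) ∪ distSphere hG.connected v a),
    Finset.sum_union hdisj, Finset.smul_sum]
  · congr 1 <;> refine Finset.sum_congr rfl fun w hw => ?_ <;>
      rw [mem_distSphere] at hw <;> rw [Finset.sum_const]
    · have hwv : w ≠ v := by rintro rfl; simp at hw
      have hcard := card_neighborFinset_filter_dist_add_one_eq hG hwv
      simp only [hw, Nat.add_right_cancel_iff] at hcard
      rw [hcard, one_nsmul]
    · rw [← hw, card_neighborFinset_filter_dist_eq_add_one hG]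
  · intro x w
    simp only [SimpleGraph.mem_neighborFinset, mem_distSphere, Finset.mem_filter, Finset.mem_union]
    refine ⟨fun ⟨hvx, hxw⟩ => ⟨⟨hvx, hxw⟩, ?_⟩, fun hxw => hxw.1⟩
    have hstep := dist_left_eq_dist_add_one_of_adj hG hvx w
    omega

end LocallyFiniteTree

namespace SemiHomTree

variable {qp qm : ℕ} {V : Type} {M : Type*} (T : SemiHomTree qp qm V)

noncomputable instance : T.G.LocallyFinite := fun v => (T.nbr_finite v).fintype

lemma isTree : T.G.IsTree := ⟨T.connected, T.acyclic⟩

lemma degree_eq (v : V) : T.G.degree v = if T.eps v then qp + 1 else qm + 1 := by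
  have hcard : T.G.degree v = {w | T.G.Adj v w}.ncard := by
    rw [← SimpleGraph.card_neighborSet_eq_degree, ← Nat.card_eq_fintype_card]; rfl
  rw [hcard]
  split_ifs with hv
  · exact T.degree_plus v hv
  · exact T.degree_minus v (Bool.eq_false_of_not_eq_true hv)

variable {T} in
lemma outDegree_congr {v v' : V} (h : T.eps v = T.eps v') (n : ℕ) :
    outDegree T.G v n = outDegree T.G v' n := by
  rw [outDegree, outDegree, T.degree_eq, T.degree_eq, h]

/-- A kernel `K` on the vertices is radial if `K v u` depends only on the distance between `v` and
`u` and on the parity of the first vertex (that of the second is then determined). -/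
def IsRadial (K : V → V → M) : Prop :=
  ∀ ⦃v u v' u' : V⦄, T.eps v = T.eps v' → T.G.dist v u = T.G.dist v' u' → K v u = K v' u'

namespace IsRadial

variable {T} {K : V → V → M}

lemma exists_profile [Nonempty M] (hK : T.IsRadial K) :
    ∃ Φ : Bool → ℕ → M, ∀ v u, K v u = Φ (T.eps v) (T.G.dist v u) := by
  have hfactors : (fun p : V × V => K p.1 p.2).FactorsThrough
      (fun p => (T.eps p.1, T.G.dist p.1 p.2)) := fun p p' h =>
    hK (congrArg Prod.fst h) (congrArg Prod.snd h)
  obtain ⟨Φ, hΦ⟩ := (Function.factorsThrough_iff _).1 hfactors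
  exact ⟨fun s d => Φ (s, d), fun v u => congrFun hΦ (v, u)⟩

lemma sum_neighborFinset [AddCommMonoid M] (hK : T.IsRadial K) :
    T.IsRadial fun v u => ∑ x ∈ T.G.neighborFinset v, K x u := by
  obtain ⟨Φ, hΦ⟩ := hK.exists_profile
  have hsum (v u : V) : ∑ x ∈ T.G.neighborFinset v, K x u =
      ∑ x ∈ T.G.neighborFinset v, Φ (!T.eps v) (T.G.dist x u) :=
    Finset.sum_congr rfl fun x hx => by
      rw [hΦ, T.adj_parity ((T.G.mem_neighborFinset v x).1 hx)]
  intro v u v' u' heps hdist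
  simp only [hsum, sum_neighborFinset_comp_dist T.isTree, heps, hdist, outDegree_congr heps]

lemma sum_distSphere [AddCancelCommMonoid M] (hK : T.IsRadial K) (a : ℕ) :
    T.IsRadial fun v u => ∑ w ∈ distSphere T.isTree.connected v a, K w u := by
  induction a using Nat.twoStepInduction with
  | zero => simpa only [distSphere_zero, Finset.sum_singleton] using hK
  | one => simpa only [distSphere_one] using hK.sum_neighborFinset
  | more a ih ih_succ =>
    intro v u v' u' heps hdist
    have hsum := ih_succ.sum_neighborFinset heps hdist
    simp only [sum_neighborFinset_sum_distSphere T.isTree] at hsum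
    have hsum_inner : ∑ w ∈ _, K w u = ∑ w ∈ _, K w u' := ih heps hdist
    rw [outDegree_congr heps, hsum_inner] at hsum
    exact add_right_cancel hsum

end IsRadial

lemma isRadial_card_dist_eq (a b : ℕ) (s : Bool) :
    T.IsRadial fun v u =>
      Nat.card {w // (T.G.dist v w, T.G.dist u w, T.eps w) = (a, b, s)} := by
  have hK : T.IsRadial fun w u => if T.G.dist w u = b ∧ T.eps w = s then 1 else 0 :=
    fun v u v' u' heps hdist => by simp only [heps, hdist]
  convert hK.sum_distSphere a with v u
  rw [← Finset.card_filter, ← Nat.card_eq_finsetCard]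
  refine Nat.card_congr (Equiv.subtypeEquivRight fun w => ?_)
  simp only [Finset.mem_filter, mem_distSphere, Prod.mk.injEq, T.G.dist_comm (u := w)]

variable {T} in
theorem exists_equiv_dist_eq {v u v' u' : V} (heps : T.eps v = T.eps v')
    (hdist : T.G.dist v u = T.G.dist v' u') :
    ∃ σ : V ≃ V, ∀ w, T.G.dist v' (σ w) = T.G.dist v w ∧
      T.G.dist u' (σ w) = T.G.dist u w ∧ T.eps (σ w) = T.eps w := by
  let position (v u w : V) : ℕ × ℕ × Bool := (T.G.dist v w, T.G.dist u w, T.eps w)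
  have hfinite (v u : V) (c : ℕ × ℕ × Bool) : Finite {w // position v u w = c} :=
    ((T.sphere_finite v c.1).subset fun w (hw : position v u w = c) =>
      congrArg Prod.fst hw).to_subtype
  have hfiber (c : ℕ × ℕ × Bool) :
      Nonempty ({w // position v u w = c} ≃ {w // position v' u' w = c}) :=
    Finite.card_eq.1 (T.isRadial_card_dist_eq c.1 c.2.1 c.2.2 heps hdist)
  refine ⟨Equiv.ofFiberEquiv fun c => (hfiber c).some, fun w => ?_⟩
  simpa only [position, Prod.mk.injEq] using
    Equiv.ofFiberEquiv_map (fun c => (hfiber c).some) w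

lemma isRadial_finsum_mem [AddCommMonoid M] (s : Bool) (f : ℕ → ℕ → M) :
    T.IsRadial fun v u => ∑ᶠ w ∈ {w | T.eps w = s}, f (T.G.dist v w) (T.G.dist u w) := by
  intro v u v' u' heps hdist
  obtain ⟨σ, hσ⟩ := exists_equiv_dist_eq heps hdist
  refine finsum_mem_eq_of_bijOn σ (σ.bijOn fun w => ?_) fun w _ => ?_
  · rw [Set.mem_ofPred_eq, (hσ w).2.2, Set.mem_ofPred_eq]
  · rw [(hσ w).1, (hσ w).2.1]

end SemiHomTree

theorem stmt_11_general {qp qm : ℕ} {V : Type} {R : Type*} [CommSemiring R]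
    (T : SemiHomTree qp qm V) (v0 : V) (hv0 : T.eps v0 = true)
    (F G : ℕ → R) (hF : (Function.support F).Finite) :
    (∀ v : V, (Function.support fun w => F (T.G.dist v w) * G (T.G.dist v0 w)).Finite) ∧
    (∃ H : ℕ → R, ∀ v : V, T.eps v = true →
      (∑ᶠ w ∈ {w : V | T.eps w = true}, F (T.G.dist v w) * G (T.G.dist v0 w)) =
        H (T.G.dist v0 v)) ∧
    (∀ v : V, T.eps v = true →
      (∑ᶠ w ∈ {w : V | T.eps w = true}, F (T.G.dist v w) * G (T.G.dist v0 w)) =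
        ∑ᶠ w ∈ {w : V | T.eps w = true}, G (T.G.dist v w) * F (T.G.dist v0 w)) := by
  have hradial := T.isRadial_finsum_mem true fun a b => F a * G b
  refine ⟨fun v => ?_, ?_, fun v hv => ?_⟩
  · refine (hF.biUnion fun a _ => T.sphere_finite v a).subset fun w hw => ?_
    exact Set.mem_biUnion (left_ne_zero_of_mul hw) rfl
  · obtain ⟨Φ, hΦ⟩ := hradial.exists_profile
    exact ⟨Φ true, fun v hv => by rw [hΦ v v0, hv, SimpleGraph.dist_comm]⟩
  · refine (hradial (hv.trans hv0.symm) SimpleGraph.dist_comm).trans ?_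
    simp only [mul_comm]

theorem stmt_11 {qp qm : ℕ} (hqp : 2 ≤ qp) (hqm : 2 ≤ qm) {V : Type}
    (T : SemiHomTree qp qm V) (v0 : V) (hv0 : T.eps v0 = true)
    (F G : ℕ → ℂ) (hF : (Function.support F).Finite) (hG : (Function.support G).Finite) :
    (∃ H : ℕ → ℂ, ∀ v : V, T.eps v = true →
      (∑ᶠ w ∈ {w : V | T.eps w = true}, F (T.G.dist v w) * G (T.G.dist v0 w)) =
        H (T.G.dist v0 v)) ∧
    (∀ v : V, T.eps v = true →
      (∑ᶠ w ∈ {w : V | T.eps w = true}, F (T.G.dist v w) * G (T.G.dist v0 w)) =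
        ∑ᶠ w ∈ {w : V | T.eps w = true}, G (T.G.dist v w) * F (T.G.dist v0 w)) := by
  exact (stmt_11_general T v0 hv0 F G hF).2
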